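/- Let C be a binary linear code of length N with weight distribution A(w), used over the binary erasure channel, and let ε* ∈ (0,1) satisfy P_MAP(ε*) = 1/2. Then for every integer 1 ≤ W ≤ N and every 0 < ε < ε*: P_MAP(ε) ≤ Φ(√W·(√(−ln ε*) − √(−ln ε))) + 2·√(−ln ε)·√W·A(W, ε*). -/

import Mathlib

open scoped Classical
open Finset

noncomputable section

/-- Erasure patterns and codewords: vectors in 𝔽₂^N. -/
abbrev Pattern (N : ℕ) := Fin N → ZMod 2

/-- Hamming weight. -/
def wH {N : ℕ} (x : Pattern N) : ℕ := hammingNorm x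

/-- `ω` covers `x` if the support of `x` is contained in the support of `ω`. -/
def covers {N : ℕ} (ω x : Pattern N) : Prop := ∀ i, x i ≠ 0 → ω i ≠ 0

/-- Product Bernoulli(ε) measure of a set of patterns. -/
def muE {N : ℕ} (ε : ℝ) (S : Finset (Pattern N)) : ℝ :=
  ∑ ω ∈ S, ε ^ wH ω * (1 - ε) ^ (N - wH ω)

/-- Erasure patterns causing a block-MAP error over the BEC. -/
def errBEC {N : ℕ} (C : Submodule (ZMod 2) (Pattern N)) : Finset (Pattern N) :=
  univ.filter (fun ω => ∃ x ∈ C, x ≠ 0 ∧ covers ω x)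

/-- Block-MAP error probability over BEC(ε). -/
def Pmap {N : ℕ} (C : Submodule (ZMod 2) (Pattern N)) (ε : ℝ) : ℝ :=
  muE ε (errBEC C)

/-- Weight distribution A(w) of the code. -/
def Aw {N : ℕ} (C : Submodule (ZMod 2) (Pattern N)) (w : ℕ) : ℕ :=
  (univ.filter (fun x : Pattern N => x ∈ C ∧ wH x = w)).card

/-- A(W, z) = ∑_{w=1}^W A(w) z^w. -/
def AW {N : ℕ} (C : Submodule (ZMod 2) (Pattern N)) (W : ℕ) (z : ℝ) : ℝ :=
  ∑ w ∈ Finset.Icc 1 W, (Aw C w : ℝ) * z ^ w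

/-- Standard normal CDF. -/
def Phi (x : ℝ) : ℝ := ∫ u in Set.Iic x, Real.exp (-u ^ 2 / 2) / Real.sqrt (2 * Real.pi)

/-- Standard normal density. -/
def gphi (x : ℝ) : ℝ := Real.exp (-x ^ 2 / 2) / Real.sqrt (2 * Real.pi)

lemma gphi_pos (x : ℝ) : 0 < gphi x := by
  unfold gphi; positivity

lemma gphi_cont : Continuous gphi := by
  unfold gphi; fun_prop

lemma gphi_deriv (x : ℝ) : HasDerivAt gphi (-x * gphi x) x := by
  have h1 : HasDerivAt (fun x : ℝ => -x ^ 2 / 2) (-x) x := by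
    have := ((hasDerivAt_pow 2 x).neg).div_const 2
    refine this.congr_deriv ?_
    norm_num
    ring
  have := (h1.exp).div_const (Real.sqrt (2 * Real.pi))
  refine this.congr_deriv ?_
  unfold gphi; ring

lemma gphi_integrable : MeasureTheory.Integrable gphi := by
  have := (integrable_exp_neg_mul_sq (b := 1/2) (by norm_num)).div_const (Real.sqrt (2 * Real.pi))
  convert this using 2 with x
  unfold gphi; congr 2; ring

lemma gphi_even (x : ℝ) : gphi (-x) = gphi x := by unfold gphi; simp

lemma Phi_eq (x : ℝ) : Phi x = ∫ u in Set.Iic x, gphi u := rfl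

lemma Phi_deriv (x : ℝ) : HasDerivAt Phi (gphi x) x := by
  have h : Phi = fun y => (∫ u in (0:ℝ)..y, gphi u) + Phi 0 := by
    funext y
    rw [Phi_eq, Phi_eq, ← intervalIntegral.integral_Iic_sub_Iic
      gphi_integrable.integrableOn gphi_integrable.integrableOn]
    ring
  rw [h]
  exact (intervalIntegral.integral_hasDerivAt_right (gphi_cont.intervalIntegrable _ _)
    (gphi_cont.stronglyMeasurableAtFilter _ _) gphi_cont.continuousAt).add_const _

lemma gphi_pdf (x : ℝ) : gphi x = ProbabilityTheory.gaussianPDFReal 0 1 x := by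
  unfold gphi ProbabilityTheory.gaussianPDFReal
  simp
  ring

lemma Phi_cdf (x : ℝ) : Phi x = ProbabilityTheory.cdf (ProbabilityTheory.gaussianReal 0 1) x := by
  rw [ProbabilityTheory.cdf_eq_real, MeasureTheory.measureReal_def,
    ProbabilityTheory.gaussianReal_apply_eq_integral 0 (one_ne_zero), ENNReal.toReal_ofReal, Phi_eq]
  · simp_rw [gphi_pdf]
  · exact MeasureTheory.integral_nonneg fun x => ProbabilityTheory.gaussianPDFReal_nonneg _ _ _

lemma Phi_cdf_fun : Phi = ProbabilityTheory.cdf (ProbabilityTheory.gaussianReal 0 1) :=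
  funext Phi_cdf

lemma Phi_bot : Filter.Tendsto Phi Filter.atBot (nhds 0) := by
  rw [Phi_cdf_fun]; exact ProbabilityTheory.tendsto_cdf_atBot _

lemma Phi_top : Filter.Tendsto Phi Filter.atTop (nhds 1) := by
  rw [Phi_cdf_fun]; exact ProbabilityTheory.tendsto_cdf_atTop _

lemma Phi_cont : Continuous Phi :=
  continuous_iff_continuousAt.2 fun x => (Phi_deriv x).continuousAt

lemma Phi_strictMono : StrictMono Phi :=
  strictMono_of_deriv_pos fun x => by rw [(Phi_deriv x).deriv]; exact gphi_pos x

lemma Phi_pos (x : ℝ) : 0 < Phi x :=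
  lt_of_le_of_lt (Phi_strictMono.monotone.le_of_tendsto Phi_bot (x - 1))
    (Phi_strictMono (by linarith))

lemma Phi_lt_one (x : ℝ) : Phi x < 1 :=
  lt_of_lt_of_le (Phi_strictMono (by linarith : x < x + 1))
    (Phi_strictMono.monotone.ge_of_tendsto Phi_top (x + 1))

lemma Phi_surj {r : ℝ} (h0 : 0 < r) (h1 : r < 1) : ∃ m, Phi m = r := by
  obtain ⟨x, hx⟩ := (Phi_bot.eventually (gt_mem_nhds h0)).exists
  obtain ⟨y, hy⟩ := (Phi_top.eventually (lt_mem_nhds h1)).exists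
  exact mem_range_of_exists_le_of_exists_ge Phi_cont ⟨x, hx.le⟩ ⟨y, hy.le⟩

lemma Phi_zero : Phi 0 = 1 / 2 := by
  rw [Phi_eq]
  have h1 := integral_comp_neg_Iic (c := (0:ℝ)) gphi
  simp only [gphi_even, neg_zero] at h1
  rw [h1]
  have h2 := integral_gaussian_Ioi (1/2)
  have h3 : (∫ x in Set.Ioi (0:ℝ), gphi x)
      = (∫ x in Set.Ioi (0:ℝ), Real.exp (-(1/2) * x ^ 2)) / Real.sqrt (2 * Real.pi) := by
    rw [← MeasureTheory.integral_div]
    congr 1; funext x; unfold gphi; congr 2; ring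
  rw [h3, h2]
  have : Real.pi / (1/2) = 2 * Real.pi := by ring
  rw [this]
  have : Real.sqrt (2 * Real.pi) ≠ 0 := by positivity
  field_simp

lemma gphi_bot : Filter.Tendsto gphi Filter.atBot (nhds 0) := by
  have h : Filter.Tendsto (fun x : ℝ => -x ^ 2 / 2) Filter.atBot Filter.atBot := by
    have h1 : Filter.Tendsto (fun x : ℝ => x ^ 2) Filter.atBot Filter.atTop := by
      have := (Filter.tendsto_pow_atTop (α := ℝ) two_ne_zero).comp Filter.tendsto_neg_atBot_atTop
      refine this.congr fun x => ?_
      simp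
    have h2 := Filter.tendsto_neg_atTop_atBot.comp h1
    exact h2.atBot_div_const two_pos
  have := (Real.tendsto_exp_atBot.comp h).div_const (Real.sqrt (2 * Real.pi))
  rw [zero_div] at this
  exact this

lemma gphi_top : Filter.Tendsto gphi Filter.atTop (nhds 0) := by
  have := gphi_bot.comp Filter.tendsto_neg_atTop_atBot
  refine this.congr fun x => gphi_even x

lemma nonneg_of_deriv {F F' : ℝ → ℝ} {x : ℝ} (hF : ∀ m, HasDerivAt F (F' m) m)
    (h0 : 0 ≤ F x) (h : ∀ m, x ≤ m → 0 ≤ F' m) : ∀ m, x ≤ m → 0 ≤ F m := by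
  intro m hm
  have : MonotoneOn F (Set.Ici x) := by
    apply monotoneOn_of_deriv_nonneg (convex_Ici x)
    · exact fun y _ => (hF y).continuousAt.continuousWithinAt
    · exact fun y _ => (hF y).differentiableAt.differentiableWithinAt
    · intro y hy
      rw [interior_Ici] at hy
      rw [(hF y).deriv]; exact h y (le_of_lt hy)
  exact h0.trans (this Set.self_mem_Ici hm hm)

/-- log-concavity of the iterated Gaussian integral -/
lemma breg (x m : ℝ) (hm : x ≤ m) :
    0 ≤ gphi m - gphi x + m * (Phi m - Phi x) ∧
    gphi m * (gphi m - gphi x + m * (Phi m - Phi x)) ≤ (Phi m - Phi x) ^ 2 := by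
  have dR : ∀ m, HasDerivAt (fun m => Phi m - Phi x) (gphi m) m := fun m =>
    (Phi_deriv m).sub_const _
  have hR : ∀ m, x ≤ m → 0 ≤ Phi m - Phi x :=
    fun m hm => sub_nonneg.2 (Phi_strictMono.monotone hm)
  have dg : ∀ m, HasDerivAt (fun m => gphi m - gphi x + m * (Phi m - Phi x)) (Phi m - Phi x) m := by
    intro m
    have := ((gphi_deriv m).sub_const (gphi x)).add ((hasDerivAt_id m).mul (dR m))
    refine this.congr_deriv ?_
    simp
  have hg := nonneg_of_deriv dg (x := x) (by simp) hR
  have hP : ∀ m, x ≤ m → 0 ≤ 2 * gphi m - gphi x + 2 * (m * (Phi m - Phi x)) := by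
    refine nonneg_of_deriv (F' := fun m => 2 * (Phi m - Phi x)) ?_ ?_ ?_
    · intro m
      have := (((gphi_deriv m).const_mul 2).sub_const (gphi x)).add
        (((hasDerivAt_id m).mul (dR m)).const_mul 2)
      refine this.congr_deriv ?_
      simp; ring
    · have := gphi_pos x
      simp; linarith
    · intro m hm; have := hR m hm; linarith
  have hM : ∀ m, x ≤ m → 0 ≤ (Phi m - Phi x) + m * (gphi m - gphi x + m * (Phi m - Phi x)) := by
    refine nonneg_of_deriv (F' := fun m => 2 * gphi m - gphi x + 2 * (m * (Phi m - Phi x))) ?_ ?_ hP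
    · intro m
      have := (dR m).add ((hasDerivAt_id m).mul (dg m))
      refine this.congr_deriv ?_
      simp; ring
    · simp
  have hL : ∀ m, x ≤ m → 0 ≤ (Phi m - Phi x) ^ 2
      - gphi m * (gphi m - gphi x + m * (Phi m - Phi x)) := by
    refine nonneg_of_deriv (F' := fun m => gphi m *
      ((Phi m - Phi x) + m * (gphi m - gphi x + m * (Phi m - Phi x)))) ?_ ?_ ?_
    · intro m
      have := ((dR m).pow 2).sub ((gphi_deriv m).mul (dg m))
      refine this.congr_deriv ?_
      simp; ring
    · simp
    · intro m hm; exact mul_nonneg (gphi_pos m).le (hM m hm)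
  exact ⟨hg m hm, by have := hL m hm; linarith⟩

/-- Two-point inequality in parametrised form. -/
def TP (a α b β m : ℝ) : Prop :=
  gphi m ≤ (1 - (Phi m - a) / (b - a)) * α + (Phi m - a) / (b - a) *
    Real.sqrt (β ^ 2 + 2 * (-Real.log ((Phi m - a) / (b - a))) * (b - a) ^ 2)

lemma TP_int {x m y : ℝ} (hxm : x < m) (hmy : m < y) :
    TP (Phi x) (gphi x) (Phi y) (gphi y) m := by
  set D := Phi y - Phi x with hD
  have hDpos : 0 < D := sub_pos.2 (Phi_strictMono (hxm.trans hmy))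
  have hRpos : ∀ n, x < n → 0 < Phi n - Phi x := fun n hn => sub_pos.2 (Phi_strictMono hn)
  let Z : ℝ → ℝ := fun n => D * (gphi n - gphi x) / (Phi n - Phi x) + gphi x
  let H : ℝ → ℝ := fun n => Z n ^ 2 + 2 * D ^ 2 * Real.log (Phi n - Phi x)
  have dH : ∀ n, x < n → HasDerivAt H (2 * D * gphi n / (Phi n - Phi x) ^ 2 *
      (D * (Phi n - Phi x) - Z n * (gphi n - gphi x + n * (Phi n - Phi x)))) n := by
    intro n hn
    have hR := hRpos n hn
    have dR : HasDerivAt (fun m => Phi m - Phi x) (gphi n) n := (Phi_deriv n).sub_const _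
    have dZ : HasDerivAt Z _ n :=
      ((((gphi_deriv n).sub_const (gphi x)).const_mul D).div dR hR.ne').add_const (gphi x)
    have := (dZ.pow 2).add ((dR.log hR.ne').const_mul (2 * D ^ 2))
    refine this.congr_deriv ?_
    field_simp
    ring
  have hmono : MonotoneOn H (Set.Icc m y) := by
    apply monotoneOn_of_deriv_nonneg (convex_Icc m y)
    · exact fun n hn => (dH n (hxm.trans_le hn.1)).continuousAt.continuousWithinAt
    · intro n hn
      rw [interior_Icc] at hn
      exact (dH n (hxm.trans hn.1)).differentiableAt.differentiableWithinAt
    · intro n hn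
      rw [interior_Icc] at hn
      have hxn := hxm.trans hn.1
      have hR := hRpos n hxn
      rw [(dH n hxn).deriv]
      obtain ⟨hg, hL⟩ := breg x n hxn.le
      have hφ := gphi_pos n
      refine mul_nonneg (by positivity) ?_
      have hRD : Phi n - Phi x ≤ D := by
        have := Phi_strictMono.monotone hn.2.le
        linarith
      have hZ : Z n ≤ D * gphi n / (Phi n - Phi x) := by
        have hα := gphi_pos x
        simp only [Z]
        rw [div_add' _ _ _ hR.ne', div_le_div_iff_of_pos_right hR]
        nlinarith
      have h1 : Z n * (gphi n - gphi x + n * (Phi n - Phi x)) ≤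
          D * gphi n / (Phi n - Phi x) * (gphi n - gphi x + n * (Phi n - Phi x)) :=
        mul_le_mul_of_nonneg_right hZ hg
      have h2 : D * gphi n / (Phi n - Phi x) * (gphi n - gphi x + n * (Phi n - Phi x))
          ≤ D * (Phi n - Phi x) := by
        rw [div_mul_eq_mul_div, div_le_iff₀ hR]
        nlinarith
      linarith
  have hle := hmono (Set.left_mem_Icc.2 hmy.le) (Set.right_mem_Icc.2 hmy.le) hmy.le
  have hR := hRpos m hxm
  have hZy : Z y = gphi y := by
    simp only [Z, ← hD]; field_simp; ring
  simp only [H, hZy, ← hD] at hle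
  unfold TP
  rw [← hD, Real.log_div hR.ne' hDpos.ne']
  have hZle : Z m ≤ Real.sqrt (gphi y ^ 2 +
      2 * (-(Real.log (Phi m - Phi x) - Real.log D)) * D ^ 2) := by
    apply Real.le_sqrt_of_sq_le
    linarith
  have hp : 0 < (Phi m - Phi x) / D := by positivity
  have := mul_le_mul_of_nonneg_left hZle hp.le
  have h3 : (Phi m - Phi x) / D * Z m = gphi m - (1 - (Phi m - Phi x) / D) * gphi x := by
    simp only [Z]; field_simp; ring
  linarith

lemma TP_left {b β m : ℝ} (hb : Phi m < b) (h : ∀ x, x < m → TP (Phi x) (gphi x) b β m) :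
    TP 0 0 b β m := by
  unfold TP at *
  have hm := Phi_pos m
  have hb0 : b - 0 ≠ 0 := by linarith
  have hp : (Phi m - 0) / (b - 0) ≠ 0 := by
    rw [sub_zero, sub_zero]; exact (div_pos hm (by linarith)).ne'
  have key : Filter.Tendsto (fun x => (Phi m - Phi x) / (b - Phi x)) Filter.atBot
      (nhds ((Phi m - 0) / (b - 0))) :=
    (tendsto_const_nhds.sub Phi_bot).div (tendsto_const_nhds.sub Phi_bot) hb0
  refine ge_of_tendsto (((tendsto_const_nhds.sub key).mul gphi_bot).add
    (key.mul (Filter.Tendsto.sqrt (tendsto_const_nhds.add (((key.log hp).neg.const_mul 2).mul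
      ((tendsto_const_nhds.sub Phi_bot).pow 2)))))) ?_
  filter_upwards [Filter.eventually_lt_atBot m] with x hx
  exact h x hx

lemma TP_right {a α m : ℝ} (ha : a < Phi m) (h : ∀ y, m < y → TP a α (Phi y) (gphi y) m) :
    TP a α 1 0 m := by
  unfold TP at *
  have hm := Phi_lt_one m
  have hb0 : 1 - a ≠ 0 := by linarith
  have hp : (Phi m - a) / (1 - a) ≠ 0 :=
    (div_pos (sub_pos.2 ha) (by linarith)).ne'
  have key : Filter.Tendsto (fun y => (Phi m - a) / (Phi y - a)) Filter.atTop
      (nhds ((Phi m - a) / (1 - a))) :=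
    tendsto_const_nhds.div (Phi_top.sub_const a) hb0
  refine ge_of_tendsto (((tendsto_const_nhds.sub key).mul_const α).add
    (key.mul (Filter.Tendsto.sqrt ((gphi_top.pow 2).add (((key.log hp).neg.const_mul 2).mul
      ((Phi_top.sub_const a).pow 2)))))) ?_
  filter_upwards [Filter.eventually_gt_atTop m] with x hx
  exact h x hx

/-- Gaussian isoperimetric function. -/
def Ifun (r : ℝ) : ℝ := if h : ∃ m, Phi m = r then gphi h.choose else 0

lemma Ifun_Phi (m : ℝ) : Ifun (Phi m) = gphi m := by
  unfold Ifun
  have h : ∃ n, Phi n = Phi m := ⟨m, rfl⟩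
  rw [dif_pos h, Phi_strictMono.injective h.choose_spec]

lemma Ifun_zero : Ifun 0 = 0 := by
  unfold Ifun
  rw [dif_neg]
  rintro ⟨m, hm⟩
  exact (Phi_pos m).ne' hm

lemma Ifun_one : Ifun 1 = 0 := by
  unfold Ifun
  rw [dif_neg]
  rintro ⟨m, hm⟩
  exact (Phi_lt_one m).ne hm

lemma Ifun_nonneg (r : ℝ) : 0 ≤ Ifun r := by
  unfold Ifun
  split_ifs with h
  · exact (gphi_pos _).le
  · exact le_rfl

lemma two_point {a b p : ℝ} (ha : 0 ≤ a) (hab : a ≤ b) (hb : b ≤ 1) (hp0 : 0 < p) (hp1 : p < 1) :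
    Ifun ((1 - p) * a + p * b) ≤ (1 - p) * Ifun a +
      p * Real.sqrt (Ifun b ^ 2 + 2 * (-Real.log p) * (b - a) ^ 2) := by
  rcases hab.eq_or_lt with rfl | hlt
  · have : (1 - p) * a + p * a = a := by ring
    rw [this]
    simp [Real.sqrt_sq (Ifun_nonneg a)]
    linarith
  obtain ⟨m, hm⟩ := Phi_surj (r := (1 - p) * a + p * b) (by nlinarith) (by nlinarith)
  have ham : a < Phi m := by rw [hm]; nlinarith
  have hmb : Phi m < b := by rw [hm]; nlinarith
  have hpm : (Phi m - a) / (b - a) = p := by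
    rw [hm, div_eq_iff (by linarith)]; ring
  have hTP : TP a (Ifun a) b (Ifun b) m := by
    have hr : ∀ x, x < m → TP (Phi x) (gphi x) b (Ifun b) m := by
      intro x hx
      rcases hb.eq_or_lt with rfl | hb1
      · rw [Ifun_one]
        exact TP_right (Phi_strictMono hx) fun y hy => TP_int hx hy
      · obtain ⟨y, rfl⟩ := Phi_surj (r := b) (by linarith) hb1
        rw [Ifun_Phi]
        exact TP_int hx (Phi_strictMono.lt_iff_lt.1 hmb)
    rcases ha.eq_or_lt with rfl | ha0
    · rw [Ifun_zero]
      exact TP_left hmb hr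
    · obtain ⟨x, rfl⟩ := Phi_surj (r := a) ha0 (by linarith)
      rw [Ifun_Phi]
      exact hr x (Phi_strictMono.lt_iff_lt.1 ham)
  unfold TP at hTP
  rwa [hpm, ← Ifun_Phi, hm] at hTP

lemma gphi_mono_neg {s t : ℝ} (hst : s ≤ t) (ht : t ≤ 0) : gphi s ≤ gphi t := by
  unfold gphi
  apply div_le_div_of_nonneg_right _ (Real.sqrt_nonneg _)
  apply Real.exp_le_exp.2
  nlinarith

lemma gphi_ge_Phi {m : ℝ} (hm : m ≤ 0) : 0.62 * Phi m ≤ gphi m := by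
  rcases le_total m (-0.65) with h | h
  · have hmono : MonotoneOn (fun m => gphi m - 0.65 * Phi m) (Set.Iic (-0.65)) := by
      have hd : ∀ n, HasDerivAt (fun m => gphi m - 0.65 * Phi m) (-n * gphi n - 0.65 * gphi n) n :=
        fun n => (gphi_deriv n).sub ((Phi_deriv n).const_mul _)
      apply monotoneOn_of_deriv_nonneg (convex_Iic _)
      · exact fun n _ => (hd n).continuousAt.continuousWithinAt
      · exact fun n _ => (hd n).differentiableAt.differentiableWithinAt
      · intro n hn
        rw [interior_Iic] at hn
        rw [(hd n).deriv]
        have := gphi_pos n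
        have hn' : n < -0.65 := hn
        nlinarith
    have hlim : Filter.Tendsto (fun m => gphi m - 0.65 * Phi m) Filter.atBot (nhds 0) := by
      have := gphi_bot.sub (Phi_bot.const_mul 0.65)
      simpa using this
    have : 0 ≤ gphi m - 0.65 * Phi m := by
      refine le_of_tendsto hlim ?_
      filter_upwards [Filter.eventually_le_atBot m] with n hn
      exact hmono (show n ≤ _ from hn.trans h) h hn
    have := Phi_pos m
    linarith
  · have h1 : Phi m ≤ 1 / 2 := by rw [← Phi_zero]; exact Phi_strictMono.monotone hm
    have h2 : 0.31 ≤ gphi m := by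
      unfold gphi
      rw [le_div_iff₀ (by positivity)]
      have he : -m ^ 2 / 2 + 1 ≤ Real.exp (-m ^ 2 / 2) := Real.add_one_le_exp _
      have hs : Real.sqrt (2 * Real.pi) ≤ 2.51 := by
        apply Real.sqrt_le_iff.2
        constructor
        · norm_num
        · have := Real.pi_lt_d2
          norm_num at this ⊢
          linarith
      nlinarith
    linarith

/-- Weight of a pattern, in product form. -/
def pw {n : ℕ} (p : ℝ) (ω : Pattern n) : ℝ := ∏ i, if ω i ≠ 0 then p else 1 - p

/-- Set of pivotal coordinates. -/
def piv {n : ℕ} (S : Pattern n → Prop) (ω : Pattern n) : Finset (Fin n) :=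
  univ.filter fun i => S ω ∧ ω i ≠ 0 ∧ ¬ S (Function.update ω i 0)

/-- Upward-closed sets of patterns. -/
def Upset {n : ℕ} (S : Pattern n → Prop) : Prop :=
  ∀ ω ω' : Pattern n, S ω → (∀ i, ω i ≠ 0 → ω' i ≠ 0) → S ω'

/-- Probability of a set. -/
def pr {n : ℕ} (S : Pattern n → Prop) (p : ℝ) : ℝ := ∑ ω, pw p ω * if S ω then 1 else 0

/-- Total influence. -/
def infl {n : ℕ} (S : Pattern n → Prop) (p : ℝ) : ℝ := ∑ ω, pw p ω * ((piv S ω).card : ℝ)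

/-- Square-root boundary. -/
def sinf {n : ℕ} (S : Pattern n → Prop) (p : ℝ) : ℝ :=
  ∑ ω, pw p ω * Real.sqrt ((piv S ω).card : ℝ)

/-- Section of a set of patterns. -/
def sec {n : ℕ} (z : ZMod 2) (S : Pattern (n + 1) → Prop) (ω : Pattern n) : Prop :=
  S (Fin.cons z ω : Pattern (n + 1))

lemma pw_nonneg {n : ℕ} {p : ℝ} (h0 : 0 ≤ p) (h1 : p ≤ 1) (ω : Pattern n) : 0 ≤ pw p ω := by
  unfold pw
  refine Finset.prod_nonneg fun i _ => ?_
  split_ifs <;> linarith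

lemma pw_zero {n : ℕ} (p : ℝ) (ω : Pattern n) :
    pw p (Fin.cons 0 ω : Pattern (n + 1)) = (1 - p) * pw p ω := by
  unfold pw; rw [Fin.prod_univ_succ]; simp

lemma pw_one {n : ℕ} (p : ℝ) (ω : Pattern n) :
    pw p (Fin.cons 1 ω : Pattern (n + 1)) = p * pw p ω := by
  unfold pw; rw [Fin.prod_univ_succ]; simp

lemma pat_sum_cons {n : ℕ} (F : Pattern (n + 1) → ℝ) :
    ∑ ω, F ω = ∑ ω : Pattern n, F (Fin.cons 0 ω : Pattern (n + 1))
      + ∑ ω : Pattern n, F (Fin.cons 1 ω : Pattern (n + 1)) := by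
  rw [← (Fin.consEquiv (fun _ : Fin (n + 1) => ZMod 2)).sum_comp, Fintype.sum_prod_type]
  exact Fin.sum_univ_two (fun z : Fin 2 => ∑ ω : Pattern n, F (Fin.cons (z : ZMod 2) ω : Pattern (n + 1)))

lemma Upset.sec {n : ℕ} {S : Pattern (n + 1) → Prop} (hS : Upset S) (z : ZMod 2) :
    Upset (sec z S) := by
  intro ω ω' h hle
  refine hS _ _ h ?_
  intro i
  refine Fin.cases ?_ (fun j => ?_) i
  · simp
  · simpa using hle j

lemma sec_sub {n : ℕ} {S : Pattern (n + 1) → Prop} (hS : Upset S) (ω : Pattern n)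
    (h : sec 0 S ω) : sec 1 S ω := by
  refine hS _ _ h ?_
  intro i
  refine Fin.cases ?_ (fun j => ?_) i
  · simp
  · simp

lemma upd_succ {n : ℕ} (z : ZMod 2) (ω : Pattern n) (j : Fin n) :
    Function.update (Fin.cons z ω : Pattern (n + 1)) j.succ 0
      = (Fin.cons z (Function.update ω j 0) : Pattern (n + 1)) :=
  (Fin.cons_update (α := fun _ => ZMod 2) z ω j 0).symm

lemma piv_zero {n : ℕ} (S : Pattern (n + 1) → Prop) (ω : Pattern n) :
    (piv S (Fin.cons 0 ω : Pattern (n + 1))).card = (piv (sec 0 S) ω).card := by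
  unfold piv
  rw [Fin.card_filter_univ_succ]
  simp only [upd_succ, sec, Fin.cons_zero, Fin.cons_succ]
  simp

lemma piv_one {n : ℕ} (S : Pattern (n + 1) → Prop) (ω : Pattern n) :
    (piv S (Fin.cons 1 ω : Pattern (n + 1))).card = (piv (sec 1 S) ω).card +
      if sec 1 S ω ∧ ¬ sec 0 S ω then 1 else 0 := by
  unfold piv
  rw [Fin.card_filter_univ_succ]
  have : Function.update (Fin.cons 1 ω : Pattern (n + 1)) 0 0 = (Fin.cons 0 ω : Pattern (n + 1)) :=
    Fin.update_cons_zero (α := fun _ => ZMod 2) 1 ω 0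
  simp only [upd_succ, this, Fin.cons_zero, Fin.cons_succ]
  simp only [ne_eq, one_ne_zero, not_false_eq_true, true_and]
  by_cases hh : S (Fin.cons 1 ω : Pattern (n + 1)) ∧ ¬ S (Fin.cons 0 ω : Pattern (n + 1))
  · rw [if_pos hh, if_pos (show sec 1 S ω ∧ ¬ sec 0 S ω from hh)]; rfl
  · rw [if_neg hh, if_neg (show ¬ (sec 1 S ω ∧ ¬ sec 0 S ω) from hh)]; rfl

lemma pr_succ {n : ℕ} (S : Pattern (n + 1) → Prop) (p : ℝ) :
    pr S p = (1 - p) * pr (sec 0 S) p + p * pr (sec 1 S) p := by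
  unfold pr
  rw [pat_sum_cons, Finset.mul_sum, Finset.mul_sum]
  simp only [pw_zero, pw_one, mul_assoc, sec]
  rfl

lemma pr_diff {n : ℕ} {S : Pattern (n + 1) → Prop} (hS : Upset S) (p : ℝ) :
    ∑ ω : Pattern n, pw p ω * (if sec 1 S ω ∧ ¬ sec 0 S ω then 1 else 0)
      = pr (sec 1 S) p - pr (sec 0 S) p := by
  unfold pr
  rw [← Finset.sum_sub_distrib]
  refine Finset.sum_congr rfl fun ω _ => ?_
  have := sec_sub hS ω
  by_cases h0 : sec 0 S ω
  · simp [h0, this h0]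
  · by_cases h1 : sec 1 S ω <;> simp [h0, h1]

lemma inf_succ {n : ℕ} {S : Pattern (n + 1) → Prop} (hS : Upset S) (p : ℝ) :
    infl S p = (1 - p) * infl (sec 0 S) p + p * (infl (sec 1 S) p +
      (pr (sec 1 S) p - pr (sec 0 S) p)) := by
  rw [← pr_diff hS]
  unfold infl
  rw [pat_sum_cons]
  simp only [pw_zero, pw_one, mul_assoc, piv_zero, piv_one]
  push_cast
  simp only [mul_add, Finset.mul_sum, Finset.sum_add_distrib]

lemma pr_nonneg {n : ℕ} (S : Pattern n → Prop) {p : ℝ} (h0 : 0 ≤ p) (h1 : p ≤ 1) :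
    0 ≤ pr S p := by
  unfold pr
  refine Finset.sum_nonneg fun ω _ => mul_nonneg (pw_nonneg h0 h1 ω) ?_
  split_ifs <;> norm_num

lemma infl_nonneg {n : ℕ} (S : Pattern n → Prop) {p : ℝ} (h0 : 0 ≤ p) (h1 : p ≤ 1) :
    0 ≤ infl S p :=
  Finset.sum_nonneg fun ω _ => mul_nonneg (pw_nonneg h0 h1 ω) (Nat.cast_nonneg _)

lemma sinf_nonneg {n : ℕ} (S : Pattern n → Prop) {p : ℝ} (h0 : 0 ≤ p) (h1 : p ≤ 1) :
    0 ≤ sinf S p :=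
  Finset.sum_nonneg fun ω _ => mul_nonneg (pw_nonneg h0 h1 ω) (Real.sqrt_nonneg _)

lemma pw_sum {n : ℕ} (p : ℝ) : ∑ ω : Pattern n, pw p ω = 1 := by
  induction n with
  | zero => simp [pw]
  | succ n ih =>
    rw [pat_sum_cons]
    simp only [pw_zero, pw_one, ← Finset.mul_sum, ih]
    ring

lemma pr_le_one {n : ℕ} (S : Pattern n → Prop) {p : ℝ} (h0 : 0 ≤ p) (h1 : p ≤ 1) :
    pr S p ≤ 1 := by
  rw [← pw_sum (n := n) p]
  unfold pr
  refine Finset.sum_le_sum fun ω _ => ?_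
  have := pw_nonneg h0 h1 ω
  split_ifs <;> linarith

/-- Margulis–Russo formula. -/
lemma russo {n : ℕ} {S : Pattern n → Prop} (hS : Upset S) {p : ℝ} (hp : 0 < p) :
    HasDerivAt (pr S) (infl S p / p) p := by
  induction n with
  | zero =>
    have h : pr S = fun _ => if S 0 then 1 else 0 := by
      funext q
      unfold pr pw; rw [Fintype.sum_eq_single (0 : Pattern 0) (fun x hx => (hx (Subsingleton.elim _ _)).elim)]; simp
    have h2 : infl S p = 0 := by simp [infl, piv]
    rw [h, h2, zero_div]
    exact hasDerivAt_const _ _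
  | succ n ih =>
    have h : pr S = fun q => (1 - q) * pr (sec 0 S) q + q * pr (sec 1 S) q :=
      funext fun q => pr_succ S q
    rw [h, inf_succ hS]
    have := (((hasDerivAt_id p).const_sub 1).mul (ih (hS.sec 0))).add
      ((hasDerivAt_id p).mul (ih (hS.sec 1)))
    refine this.congr_deriv ?_
    simp only [id]
    field_simp
    ring

lemma minkowski {ι : Type*} (s : Finset ι) (w X Y : ι → ℝ) (hw : ∀ i ∈ s, 0 ≤ w i) :
    Real.sqrt ((∑ i ∈ s, w i * X i) ^ 2 + (∑ i ∈ s, w i * Y i) ^ 2)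
      ≤ ∑ i ∈ s, w i * Real.sqrt (X i ^ 2 + Y i ^ 2) := by
  set A := ∑ i ∈ s, w i * X i with hA
  set B := ∑ i ∈ s, w i * Y i with hB
  set L := Real.sqrt (A ^ 2 + B ^ 2) with hL
  have hL0 : 0 ≤ L := Real.sqrt_nonneg _
  have hLsq : L ^ 2 = A ^ 2 + B ^ 2 := Real.sq_sqrt (by positivity)
  have key : L * L ≤ L * ∑ i ∈ s, w i * Real.sqrt (X i ^ 2 + Y i ^ 2) := by
    have h1 : L * L = ∑ i ∈ s, w i * (A * X i + B * Y i) := by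
      have : ∑ i ∈ s, w i * (A * X i + B * Y i) = A * A + B * B := by
        conv_rhs => rw [hA, hB]
        rw [Finset.mul_sum, Finset.mul_sum, ← Finset.sum_add_distrib]
        refine Finset.sum_congr rfl fun i _ => ?_
        rw [← hA, ← hB]
        ring
      rw [this]; nlinarith
    rw [h1, Finset.mul_sum]
    refine Finset.sum_le_sum fun i hi => ?_
    have h2 : A * X i + B * Y i ≤ L * Real.sqrt (X i ^ 2 + Y i ^ 2) := by
      rw [hL, ← Real.sqrt_mul (by positivity)]
      apply Real.le_sqrt_of_sq_le
      nlinarith [sq_nonneg (A * Y i - B * X i)]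
    have := mul_le_mul_of_nonneg_left h2 (hw i hi)
    linarith
  rcases hL0.eq_or_lt with h | h
  · rw [← h]
    exact Finset.sum_nonneg fun i hi => mul_nonneg (hw i hi) (Real.sqrt_nonneg _)
  · exact le_of_mul_le_mul_left key h

/-- Isoperimetric inequality. -/
lemma isop {n : ℕ} {S : Pattern n → Prop} (hS : Upset S) {p : ℝ} (hp : 0 < p) (hp1 : p < 1) :
    Ifun (pr S p) ≤ Real.sqrt (2 * (-Real.log p)) * sinf S p := by
  induction n with
  | zero =>
    have h : Ifun (pr S p) = 0 := by
      have h : pr S p = if S 0 then 1 else 0 := by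
        unfold pr pw; rw [Fintype.sum_eq_single (0 : Pattern 0) (fun x hx => (hx (Subsingleton.elim _ _)).elim)]; simp
      rw [h]
      split_ifs
      · exact Ifun_one
      · exact Ifun_zero
    rw [h]
    exact mul_nonneg (Real.sqrt_nonneg _) (sinf_nonneg S hp.le hp1.le)
  | succ n ih =>
    have hlog : 0 ≤ 2 * (-Real.log p) := by
      have := Real.log_neg hp hp1
      linarith
    set c := Real.sqrt (2 * (-Real.log p)) with hc
    have hc0 : 0 ≤ c := Real.sqrt_nonneg _
    have hcsq : c ^ 2 = 2 * (-Real.log p) := Real.sq_sqrt hlog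
    have i0 := ih (hS.sec 0)
    have i1 := ih (hS.sec 1)
    have hd := pr_diff hS p
    set a := pr (sec 0 S) p with ha
    set b := pr (sec 1 S) p with hb
    have hab : a ≤ b := by
      rw [← sub_nonneg, ← hd]
      refine Finset.sum_nonneg fun ω _ => mul_nonneg (pw_nonneg hp.le hp1.le ω) ?_
      split_ifs <;> norm_num
    have htp := two_point (pr_nonneg (sec 0 S) hp.le hp1.le) hab
      (pr_le_one (sec 1 S) hp.le hp1.le) hp hp1
    rw [pr_succ, ← ha, ← hb]
    refine htp.trans ?_
    have hs : sinf S p = (1 - p) * sinf (sec 0 S) p + p * ∑ ω : Pattern n, pw p ω *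
        Real.sqrt (Real.sqrt ((piv (sec 1 S) ω).card : ℝ) ^ 2 +
          (if sec 1 S ω ∧ ¬ sec 0 S ω then 1 else 0) ^ 2) := by
      unfold sinf
      rw [pat_sum_cons, Finset.mul_sum, Finset.mul_sum]
      simp only [pw_zero, pw_one, mul_assoc, piv_zero, piv_one]
      congr 1
      refine Finset.sum_congr rfl fun ω _ => ?_
      rw [Real.sq_sqrt (Nat.cast_nonneg _)]
      push_cast
      congr 4
      split_ifs <;> norm_num
    have hmk := minkowski univ (fun ω : Pattern n => pw p ω)
      (fun ω => Real.sqrt ((piv (sec 1 S) ω).card : ℝ))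
      (fun ω => if sec 1 S ω ∧ ¬ sec 0 S ω then 1 else 0) (fun ω _ => pw_nonneg hp.le hp1.le ω)
    rw [hd] at hmk
    have h1 : Real.sqrt (Ifun b ^ 2 + 2 * (-Real.log p) * (b - a) ^ 2) ≤
        c * Real.sqrt (sinf (sec 1 S) p ^ 2 + (b - a) ^ 2) := by
      rw [← hcsq]
      have : c * Real.sqrt (sinf (sec 1 S) p ^ 2 + (b - a) ^ 2) =
          Real.sqrt ((c * sinf (sec 1 S) p) ^ 2 + c ^ 2 * (b - a) ^ 2) := by
        rw [mul_pow, ← mul_add, Real.sqrt_mul (sq_nonneg c), Real.sqrt_sq hc0]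
      rw [this]
      apply Real.sqrt_le_sqrt
      have := pow_le_pow_left₀ (Ifun_nonneg b) i1 2
      linarith
    have h2 := h1.trans (mul_le_mul_of_nonneg_left hmk hc0)
    rw [hs]
    have h3 := mul_le_mul_of_nonneg_left h2 hp.le
    have h4 := mul_le_mul_of_nonneg_left i0 (by linarith : 0 ≤ 1 - p)
    linarith

lemma pw_eq {n : ℕ} (p : ℝ) (ω : Pattern n) : pw p ω = p ^ wH ω * (1 - p) ^ (n - wH ω) := by
  unfold pw
  have hw : wH ω = (univ.filter fun i => ω i ≠ 0).card := by
    unfold wH hammingNorm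
    congr
  have hc := Finset.card_filter_add_card_filter_not (s := (univ : Finset (Fin n))) (fun i => ω i ≠ 0)
  rw [Finset.card_univ, Fintype.card_fin, ← hw] at hc
  rw [Finset.prod_ite, Finset.prod_const, Finset.prod_const, ← hw]
  congr 2
  omega

/-- MAP error event as a predicate. -/
def errS {N : ℕ} (C : Submodule (ZMod 2) (Pattern N)) (ω : Pattern N) : Prop :=
  ∃ x ∈ C, x ≠ 0 ∧ covers ω x

lemma errS_upset {N : ℕ} (C : Submodule (ZMod 2) (Pattern N)) : Upset (errS C) := by
  rintro ω ω' ⟨x, hx, h0, hc⟩ h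
  exact ⟨x, hx, h0, fun i hi => h i (hc i hi)⟩

lemma Pmap_eq {N : ℕ} (C : Submodule (ZMod 2) (Pattern N)) (p : ℝ) :
    Pmap C p = pr (errS C) p := by
  unfold Pmap muE errBEC pr
  rw [Finset.sum_filter]
  refine Finset.sum_congr rfl fun ω _ => ?_
  rw [pw_eq, mul_ite, mul_one, mul_zero]
  by_cases h : errS C ω
  · rw [if_pos h]; exact if_pos h
  · rw [if_neg h]; exact if_neg h

lemma piv_card {N : ℕ} (C : Submodule (ZMod 2) (Pattern N)) (ω : Pattern N)
    (h : 0 < (piv (errS C) ω).card) :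
    ∃ x ∈ C, wH x = (piv (errS C) ω).card ∧ covers ω x := by
  obtain ⟨i, hi⟩ := Finset.card_pos.1 h
  have z2 : ∀ a b : ZMod 2, a ≠ 0 → b ≠ 0 → a + b = 0 := by decide
  have all : ∀ y ∈ C, y ≠ 0 → covers ω y → ∀ j ∈ piv (errS C) ω, y j ≠ 0 := by
    intro y hy hy0 hcy j hj hyj
    simp only [piv, Finset.mem_filter, Finset.mem_univ, true_and] at hj
    refine hj.2.2 ⟨y, hy, hy0, fun k hk => ?_⟩
    by_cases hkj : k = j
    · subst hkj; exact absurd hyj hk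
    · rw [Function.update_of_ne hkj]; exact hcy k hk
  have hi' := hi
  simp only [piv, Finset.mem_filter, Finset.mem_univ, true_and] at hi'
  obtain ⟨x, hx, hx0, hcx⟩ := hi'.1
  refine ⟨x, hx, ?_, hcx⟩
  have hset : piv (errS C) ω = univ.filter fun j => x j ≠ 0 := by
    ext j
    constructor
    · intro hj
      simpa using all x hx hx0 hcx j hj
    · intro hj
      have hxj : x j ≠ 0 := by simpa using hj
      simp only [piv, Finset.mem_filter, Finset.mem_univ, true_and]
      refine ⟨hi'.1, hcx j hxj, ?_⟩
      rintro ⟨y, hy, hy0, hcy⟩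
      have hyj : y j = 0 := by
        by_contra hne
        have := hcy j hne
        simp at this
      have hcy' : covers ω y := by
        intro k hk
        have := hcy k hk
        by_cases hkj : k = j
        · subst hkj; exact absurd hyj hk
        · rwa [Function.update_of_ne hkj] at this
      have hcxy : covers ω (x + y) := by
        intro k hk
        by_cases hxk : x k = 0
        · apply hcy' k
          intro hyk; apply hk; simp [hxk, hyk]
        · exact hcx k hxk
      have hne : x + y ≠ 0 := by
        intro he
        have := congrFun he j
        simp [hyj] at this
        exact hxj this
      exact all (x + y) (C.add_mem hx hy) hne hcxy i hi
        (z2 _ _ (all x hx hx0 hcx i hi) (all y hy hy0 hcy' i hi))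
  rw [hset]
  unfold wH hammingNorm
  congr

lemma cover_prob {N : ℕ} (x : Pattern N) (p : ℝ) :
    ∑ ω : Pattern N, pw p ω * (if covers ω x then 1 else 0) = p ^ wH x := by
  have h1 : ∀ ω : Pattern N, pw p ω * (if covers ω x then 1 else 0) =
      ∏ i, ((if ω i ≠ 0 then p else 1 - p) * if (x i ≠ 0 → ω i ≠ 0) then 1 else 0) := by
    intro ω
    rw [Finset.prod_mul_distrib]
    unfold pw
    congr 1
    unfold covers
    by_cases h : ∀ i, x i ≠ 0 → ω i ≠ 0
    · rw [if_pos h]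
      symm
      exact Finset.prod_eq_one fun i _ => if_pos (h i)
    · rw [if_neg h]
      push Not at h
      obtain ⟨i, hi, hi'⟩ := h
      symm
      exact Finset.prod_eq_zero (Finset.mem_univ i) (if_neg (by tauto))
  simp_rw [h1]
  have h2 := Finset.prod_univ_sum (fun _ : Fin N => (univ : Finset (ZMod 2)))
    (fun i z => (if z ≠ 0 then p else 1 - p) * if (x i ≠ 0 → z ≠ 0) then (1:ℝ) else 0)
  rw [Fintype.piFinset_univ] at h2
  rw [← h2]
  have h3 : ∀ i, (∑ z : ZMod 2, (if z ≠ 0 then p else 1 - p) *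
      if (x i ≠ 0 → z ≠ 0) then (1:ℝ) else 0) = if x i ≠ 0 then p else 1 := by
    intro i
    have := Fin.sum_univ_two (fun z : Fin 2 => (if (z : ZMod 2) ≠ 0 then p else 1 - p) *
      if (x i ≠ 0 → (z : ZMod 2) ≠ 0) then (1:ℝ) else 0)
    refine this.trans ?_
    have e0 : ((0 : Fin 2) : ZMod 2) = 0 := rfl
    have e1 : ((1 : Fin 2) : ZMod 2) = 1 := rfl
    rw [e0, e1]
    by_cases hx : x i = 0 <;> simp [hx]
  simp_rw [h3]
  rw [Finset.prod_ite, Finset.prod_const, Finset.prod_const_one, mul_one]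
  unfold wH hammingNorm
  congr

lemma low_bound {N : ℕ} (C : Submodule (ZMod 2) (Pattern N)) (W : ℕ) {p : ℝ}
    (h0 : 0 ≤ p) (h1 : p ≤ 1) :
    ∑ ω : Pattern N, pw p ω * (if 0 < (piv (errS C) ω).card ∧ (piv (errS C) ω).card ≤ W
      then 1 else 0) ≤ AW C W p := by
  have hA : AW C W p = ∑ w ∈ Finset.Icc 1 W,
      ∑ x ∈ univ.filter (fun x : Pattern N => x ∈ C ∧ wH x = w),
        ∑ ω : Pattern N, pw p ω * (if covers ω x then 1 else 0) := by
    unfold AW Aw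
    refine Finset.sum_congr rfl fun w _ => ?_
    rw [← nsmul_eq_mul, ← Finset.sum_const]
    refine Finset.sum_congr rfl fun x hx => ?_
    rw [cover_prob, (Finset.mem_filter.1 hx).2.2]
  have hnn : ∀ (x ω : Pattern N), 0 ≤ pw p ω * (if covers ω x then (1:ℝ) else 0) := by
    intro x ω
    refine mul_nonneg (pw_nonneg h0 h1 ω) ?_
    split_ifs <;> norm_num
  have hA2 : AW C W p = ∑ ω : Pattern N, ∑ w ∈ Finset.Icc 1 W,
      ∑ x ∈ univ.filter (fun x : Pattern N => x ∈ C ∧ wH x = w),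
        pw p ω * (if covers ω x then 1 else 0) := by
    rw [hA, Finset.sum_comm]
    refine Finset.sum_congr rfl fun w _ => ?_
    rw [Finset.sum_comm]
  rw [hA2]
  refine Finset.sum_le_sum fun ω _ => ?_
  split_ifs with h
  · obtain ⟨x, hx, hw, hc⟩ := piv_card C ω h.1
    have hmem : wH x ∈ Finset.Icc 1 W := by
      rw [Finset.mem_Icc, hw]; exact ⟨h.1, h.2⟩
    refine le_trans ?_ (Finset.single_le_sum (f := fun w =>
      ∑ x ∈ univ.filter (fun x : Pattern N => x ∈ C ∧ wH x = w),
        pw p ω * (if covers ω x then (1:ℝ) else 0))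
      (fun w _ => Finset.sum_nonneg fun x _ => hnn x ω) hmem)
    refine le_trans ?_ (Finset.single_le_sum (f := fun x =>
        pw p ω * (if covers ω x then (1:ℝ) else 0))
      (fun x _ => hnn x ω) (Finset.mem_filter.2 ⟨Finset.mem_univ x, hx, rfl⟩))
    simp [hc]
  · rw [mul_zero]
    exact Finset.sum_nonneg fun w _ => Finset.sum_nonneg fun x _ => hnn x ω

lemma infl_ge {N : ℕ} (C : Submodule (ZMod 2) (Pattern N)) (W : ℕ) {p : ℝ}
    (h0 : 0 ≤ p) (h1 : p ≤ 1) :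
    Real.sqrt W * sinf (errS C) p - W / 4 * AW C W p ≤ infl (errS C) p := by
  have hl := mul_le_mul_of_nonneg_left (low_bound C W h0 h1) (by positivity : (0:ℝ) ≤ W / 4)
  refine le_trans (sub_le_sub_left hl _) ?_
  unfold sinf infl
  rw [Finset.mul_sum, Finset.mul_sum, ← Finset.sum_sub_distrib]
  refine Finset.sum_le_sum fun ω _ => ?_
  have hp := pw_nonneg h0 h1 ω
  set k := (piv (errS C) ω).card with hk
  have key : Real.sqrt W * Real.sqrt k - W / 4 * (if 0 < k ∧ k ≤ W then 1 else 0) ≤ (k : ℝ) := by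
    have hW := Real.sq_sqrt (Nat.cast_nonneg (α := ℝ) W)
    have hk2 := Real.sq_sqrt (Nat.cast_nonneg (α := ℝ) k)
    have hk0 := Real.sqrt_nonneg (k : ℝ)
    split_ifs with h
    · nlinarith [sq_nonneg (Real.sqrt W / 2 - Real.sqrt k)]
    · rcases Nat.eq_zero_or_pos k with hz | hz
      · simp [hz]
      · have hWk : W ≤ k := by
          by_contra hh
          exact h ⟨hz, by omega⟩
        have : Real.sqrt W ≤ Real.sqrt k := Real.sqrt_le_sqrt (by exact_mod_cast hWk)
        nlinarith
  have := mul_le_mul_of_nonneg_left key hp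
  linarith

lemma AW_mono {N : ℕ} (C : Submodule (ZMod 2) (Pattern N)) (W : ℕ) {p q : ℝ}
    (h0 : 0 ≤ p) (h1 : p ≤ q) : AW C W p ≤ AW C W q := by
  unfold AW
  refine Finset.sum_le_sum fun w _ => ?_
  gcongr

lemma AW_nonneg {N : ℕ} (C : Submodule (ZMod 2) (Pattern N)) (W : ℕ) {p : ℝ}
    (h0 : 0 ≤ p) : 0 ≤ AW C W p := by
  unfold AW
  positivity

theorem BEC_upper (N : ℕ) (C : Submodule (ZMod 2) (Pattern N))
    (εstar : ℝ) (hεstar : εstar ∈ Set.Ioo (0 : ℝ) 1)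
    (hhalf : Pmap C εstar = 1 / 2) :
    ∀ W : ℕ, 1 ≤ W → W ≤ N → ∀ ε : ℝ, 0 < ε → ε < εstar →
      Pmap C ε ≤
        Phi (Real.sqrt W * (Real.sqrt (-Real.log εstar) - Real.sqrt (-Real.log ε)))
          + 2 * Real.sqrt (-Real.log ε) * Real.sqrt W * AW C W εstar := by
  intro W hW1 _ ε hε hεlt
  obtain ⟨hs0, hs1⟩ := hεstar
  rw [Pmap_eq] at hhalf ⊢
  set f := pr (errS C) with hf
  set B := AW C W εstar with hB
  have hB0 : 0 ≤ B := AW_nonneg C W hs0.le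
  set R := Real.sqrt W with hR
  have hRpos : 0 < R := Real.sqrt_pos.2 (by exact_mod_cast hW1)
  have hRsq : R ^ 2 = W := Real.sq_sqrt (Nat.cast_nonneg W)
  let s : ℝ → ℝ := fun p => Real.sqrt (-Real.log p)
  let v : ℝ → ℝ := fun p => Phi (R * (s εstar - s p)) + 2 * s p * R * B
  have hspos : ∀ p, 0 < p → p < 1 → 0 < s p := fun p h0 h1 =>
    Real.sqrt_pos.2 (by have := Real.log_neg h0 h1; linarith)
  have ds : ∀ p, 0 < p → p < 1 → HasDerivAt s (-(1 / (2 * p * s p))) p := by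
    intro p h0 h1
    have hl : -Real.log p ≠ 0 := by have := Real.log_neg h0 h1; linarith
    have := ((Real.hasDerivAt_log h0.ne').neg).sqrt hl
    refine this.congr_deriv ?_
    have := (hspos p h0 h1).ne'
    change -p⁻¹ / (2 * s p) = _
    field_simp
  have dv : ∀ p, 0 < p → p < 1 → HasDerivAt v
      (R / (2 * p * s p) * (gphi (R * (s εstar - s p)) - 2 * B)) p := by
    intro p h0 h1
    have d := ds p h0 h1
    have := ((Phi_deriv (R * (s εstar - s p))).comp p ((d.const_sub (s εstar)).const_mul R)).add
      (((d.const_mul 2).mul_const R).mul_const B)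
    refine this.congr_deriv ?_
    have := (hspos p h0 h1).ne'
    field_simp
    ring
  have df : ∀ p, 0 < p → HasDerivAt f (infl (errS C) p / p) p := fun p h0 =>
    russo (errS_upset C) h0
  have fmono : MonotoneOn f (Set.Ioo 0 1) := by
    apply monotoneOn_of_deriv_nonneg (convex_Ioo 0 1)
    · exact fun p hp => (df p hp.1).continuousAt.continuousWithinAt
    · rw [interior_Ioo]
      exact fun p hp => (df p hp.1).differentiableAt.differentiableWithinAt
    · rw [interior_Ioo]
      intro p hp
      rw [(df p hp.1).deriv]
      exact div_nonneg (infl_nonneg _ hp.1.le hp.2.le) hp.1.le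
  have main : ∀ p, 0 < p → p ≤ εstar → f p = v p →
      R / (2 * p * s p) * (gphi (R * (s εstar - s p)) - 2 * B) < infl (errS C) p / p := by
    intro p h0 hps hfv
    have h1 : p < 1 := hps.trans_lt hs1
    have hs := hspos p h0 h1
    have hfle : f p ≤ 1 / 2 := by
      rw [← hhalf]; exact fmono ⟨h0, h1⟩ ⟨hs0, hs1⟩ hps
    set t := R * (s εstar - s p) with ht
    have hu := Phi_pos t
    have he : 0 ≤ 2 * s p * R * B := by positivity
    have hfv' : f p = Phi t + 2 * s p * R * B := hfv
    obtain ⟨m, hm⟩ := Phi_surj (r := f p) (by linarith) (by linarith)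
    have hm0 : m ≤ 0 := by
      rw [← Phi_strictMono.le_iff_le, Phi_zero, hm]; exact hfle
    have htm : t ≤ m := by
      rw [← Phi_strictMono.le_iff_le, hm]; linarith
    have g1 := gphi_mono_neg htm hm0
    have g2 := gphi_ge_Phi hm0
    have iso := isop (errS_upset C) h0 h1
    rw [← hf, ← hm, Ifun_Phi, Real.sqrt_mul (by norm_num)] at iso
    change gphi m ≤ Real.sqrt 2 * s p * sinf (errS C) p at iso
    have hin := infl_ge C W h0.le h1.le
    rw [← hR, ← hRsq] at hin
    have hAB : AW C W p ≤ B := AW_mono C W h0.le hps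
    have hin2 : R * sinf (errS C) p - R ^ 2 / 4 * B ≤ infl (errS C) p := by
      have := mul_le_mul_of_nonneg_left hAB (by positivity : (0:ℝ) ≤ R ^ 2 / 4)
      linarith
    have h2sq : Real.sqrt 2 ^ 2 = 2 := Real.sq_sqrt (by norm_num)
    have h2 : 1.41 ≤ Real.sqrt 2 := Real.le_sqrt_of_sq_le (by norm_num)
    have iso2 : Real.sqrt 2 * gphi m ≤ 2 * s p * sinf (errS C) p := by
      have := mul_le_mul_of_nonneg_left iso (Real.sqrt_nonneg 2)
      calc _ ≤ _ := this
        _ = Real.sqrt 2 ^ 2 * s p * sinf (errS C) p := by ring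
        _ = _ := by rw [h2sq]
    have hgm := gphi_pos m
    have key : gphi t - 2 * B < 2 * s p * sinf (errS C) p - s p * R * B / 2 := by
      rw [hm] at g2
      nlinarith
    have h3 : R / (2 * p * s p) * (gphi t - 2 * B) <
        R / (2 * p * s p) * (2 * s p * sinf (errS C) p - s p * R * B / 2) :=
      mul_lt_mul_of_pos_left key (by positivity)
    refine h3.trans_le ?_
    have h4 : R / (2 * p * s p) * (2 * s p * sinf (errS C) p - s p * R * B / 2)
        = (R * sinf (errS C) p - R ^ 2 / 4 * B) / p := by
      field_simp
      ring
    rw [h4]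
    exact div_le_div_of_nonneg_right hin2 h0.le
  have fence := image_le_of_deriv_right_lt_deriv_boundary' (f := fun t => f (-t))
    (f' := fun t => -(infl (errS C) (-t) / (-t))) (a := -εstar) (b := -ε)
    (B := fun t => v (-t))
    (B' := fun t => -(R / (2 * (-t) * s (-t)) * (gphi (R * (s εstar - s (-t))) - 2 * B)))
    ?_ ?_ ?_ ?_ ?_ ?_ (x := -ε) ⟨by linarith, le_rfl⟩
  · simpa only [neg_neg] using fence
  · intro t ht
    have : ContinuousAt f (-t) := (df (-t) (by linarith [ht.2])).continuousAt
    exact (ContinuousAt.comp (f := fun t : ℝ => -t) this continuousAt_neg).continuousWithinAt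
  · intro t ht
    have := (df (-t) (by linarith [ht.2])).scomp t (hasDerivAt_neg t)
    refine (this.congr_deriv ?_).hasDerivWithinAt
    simp
  · simp only [neg_neg, v, sub_self, mul_zero, Phi_zero, hhalf]
    have := hspos εstar hs0 hs1
    have : 0 ≤ 2 * s εstar * R * B := by positivity
    linarith
  · intro t ht
    have : ContinuousAt v (-t) := (dv (-t) (by linarith [ht.2]) (by linarith [ht.1])).continuousAt
    exact (ContinuousAt.comp (f := fun t : ℝ => -t) this continuousAt_neg).continuousWithinAt
  · intro t ht
    have := (dv (-t) (by linarith [ht.2]) (by linarith [ht.1])).scomp t (hasDerivAt_neg t)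
    refine (this.congr_deriv ?_).hasDerivWithinAt
    simp
  · intro t ht heq
    have := main (-t) (by linarith [ht.2]) (by linarith [ht.1]) heq
    exact neg_lt_neg this

end
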